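/- arXiv:2410.08902 — 4 statements merged into one kernel-verified Lean document; each statement's English description precedes it below -/
import Mathlib

section
/- Let G be a residually finite group and let N be a finite normal subgroup of G. Then the quotient group G/N is residually finite. -/
/-- A group is residually finite if every nontrivial element is excluded by some
finite-index normal subgroup. -/
def ResiduallyFinite (G : Type*) [Group G] : Prop :=
  ∀ g : G, g ≠ 1 → ∃ N : Subgroup G, N.Normal ∧ N.FiniteIndex ∧ g ∉ N

/-- If `G` is residually finite and `N` is a finite normal subgroup of `G`, then `G ⧸ N` is
residually finite. -/
theorem residuallyFinite_quotient_of_finite_normal {G : Type*} [Group G]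
    (hG : ResiduallyFinite G) (N : Subgroup G) [N.Normal] (hN : Finite N) :
    ResiduallyFinite (G ⧸ N) := by
  intro q hq
  obtain ⟨g, rfl⟩ := QuotientGroup.mk_surjective q
  have hg : g ∉ N := fun h => hq ((QuotientGroup.eq_one_iff g).2 h)
  have h1 : ∀ n : N, g * n ≠ 1 := by
    intro n h
    apply hg
    rw [eq_inv_of_mul_eq_one_left h]
    exact N.inv_mem n.2
  choose K hKn hKf hK using fun n : N => hG _ (h1 n)
  have hinf : (⨅ n, K n).FiniteIndex := Subgroup.finiteIndex_iInf hKf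
  have hnor : (⨅ n, K n).Normal := Subgroup.normal_iInf_normal hKn
  have hsurj : Function.Surjective (QuotientGroup.mk' N) := QuotientGroup.mk'_surjective N
  refine ⟨(⨅ n, K n).map (QuotientGroup.mk' N), hnor.map _ hsurj, ⟨?_⟩, ?_⟩
  · exact ne_zero_of_dvd_ne_zero hinf.index_ne_zero (Subgroup.index_map_dvd _ hsurj)
  · rintro ⟨k, hk, hkg⟩
    have hm : g⁻¹ * k ∈ N := QuotientGroup.eq.1 (Eq.symm hkg)
    have := (Subgroup.mem_iInf.1 hk) ⟨_, hm⟩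
    apply hK ⟨_, hm⟩
    simpa using this
end

section
/- Let φ : G → H be a group homomorphism whose kernel is finite and whose image has finite index in H. If G is residually finite, then H is residually finite. -/
/-- If `φ : G →* H` has finite kernel and finite-index image, and `G` is residually finite,
then `H` is residually finite. -/
theorem residuallyFinite_of_finite_kernel_finiteIndex_range {G H : Type*} [Group G] [Group H]
    (φ : G →* H) (hker : Finite φ.ker) (hrange : φ.range.FiniteIndex)
    (hG : ResiduallyFinite G) : ResiduallyFinite H := by
  have key : ∀ h : H, h ≠ 1 → ∃ K : Subgroup H, K.FiniteIndex ∧ h ∉ K := by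
    intro h hh
    by_cases hr : h ∈ φ.range
    · obtain ⟨g, rfl⟩ := hr
      have h1 : ∀ k : φ.ker, g * (k : G) ≠ 1 := by
        intro k hk
        apply hh
        have h2 := congrArg φ hk
        rwa [map_mul, (MonoidHom.mem_ker).1 k.2, mul_one, map_one] at h2
      choose N _ hNf hN using fun k : φ.ker => hG _ (h1 k)
      have hM : (⨅ k, N k).FiniteIndex := Subgroup.finiteIndex_iInf hNf
      refine ⟨(⨅ k, N k).map φ, ⟨?_⟩, ?_⟩
      · rw [Subgroup.index_map]
        have hS : ((⨅ k, N k) ⊔ φ.ker).FiniteIndex := Subgroup.finiteIndex_of_le le_sup_left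
        exact mul_ne_zero hS.index_ne_zero hrange.index_ne_zero
      · rintro ⟨m, hm, hmg⟩
        have hk : g⁻¹ * m ∈ φ.ker := by
          rw [MonoidHom.mem_ker, map_mul, map_inv, hmg, inv_mul_cancel]
        apply hN ⟨g⁻¹ * m, hk⟩
        have h3 := (Subgroup.mem_iInf.1 hm) ⟨g⁻¹ * m, hk⟩
        simpa using h3
    · exact ⟨φ.range, hrange, hr⟩
  intro h hh
  obtain ⟨K, hK, hn⟩ := key h hh
  exact ⟨K.normalCore, inferInstance, inferInstance, fun hc => hn (K.normalCore_le hc)⟩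
end

section
/- Let G be a residually finite group and let K be a finite normal subgroup of G. Then there exist a finite group F and a group homomorphism φ : G → F such that the homomorphism G → (G/K) × F sending g to (gK, φ(g)) is injective and its image is a subgroup of finite index in (G/K) × F. (In particular, G is commensurable with G/K: G is isomorphic to a finite-index subgroup of a group containing G/K as a finite-index subgroup.) -/
universe u

/-- If `G` is residually finite and `K` is a finite normal subgroup, then there is a finite group
`F` and a homomorphism `φ : G →* F` such that `g ↦ (gK, φ g)` is injective with finite-index
image in `(G ⧸ K) × F`; in particular `G` is commensurable with `G ⧸ K`. -/
theorem exists_injective_finiteIndex_into_quotient_prod_finite {G : Type u} [Group G]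
    (hG : ResiduallyFinite G) (K : Subgroup G) [K.Normal] (hK : Finite K) :
    ∃ (F : Type u) (_ : Group F) (_ : Finite F) (φ : G →* F),
      Function.Injective ((QuotientGroup.mk' K).prod φ) ∧
      ((QuotientGroup.mk' K).prod φ).range.FiniteIndex := by
  have h : ∀ k : K, ∃ N : Subgroup G, N.Normal ∧ N.FiniteIndex ∧ ((k : G) ≠ 1 → (k : G) ∉ N) := by
    intro k
    by_cases hk : (k : G) = 1
    · exact ⟨⊤, inferInstance, inferInstance, fun h => absurd hk h⟩
    · obtain ⟨N, h1, h2, h3⟩ := hG k hk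
      exact ⟨N, h1, h2, fun _ => h3⟩
  choose N hn hf hN using h
  have hfi : (⨅ k, N k).FiniteIndex := Subgroup.finiteIndex_iInf hf
  have hno : (⨅ k, N k).Normal := Subgroup.normal_iInf_normal hn
  refine ⟨G ⧸ (⨅ k, N k), inferInstance, inferInstance, QuotientGroup.mk' _, ?_, ?_⟩
  · rw [injective_iff_map_eq_one]
    intro g hg
    have h1 : (QuotientGroup.mk' K) g = 1 := congrArg Prod.fst hg
    have h2 : (QuotientGroup.mk' (⨅ k, N k)) g = 1 := congrArg Prod.snd hg
    have h1' : g ∈ K := (QuotientGroup.eq_one_iff g).1 h1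
    have h2' : g ∈ ⨅ k, N k := (QuotientGroup.eq_one_iff g).1 h2
    by_contra hne
    exact hN ⟨g, h1'⟩ hne (Subgroup.mem_iInf.1 h2' ⟨g, h1'⟩)
  · rw [Subgroup.finiteIndex_iff_finite_quotient]
    refine Finite.of_surjective (fun f : G ⧸ (⨅ k, N k) =>
      (QuotientGroup.mk ((1 : G ⧸ K), f) : _ ⧸ ((QuotientGroup.mk' K).prod
        (QuotientGroup.mk' (⨅ k, N k))).range)) ?_
    intro q
    obtain ⟨⟨a, f⟩, rfl⟩ := QuotientGroup.mk_surjective q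
    obtain ⟨g, rfl⟩ := QuotientGroup.mk'_surjective K a
    refine ⟨f * (QuotientGroup.mk' _ g)⁻¹, ?_⟩
    refine QuotientGroup.eq.2 ⟨g, ?_⟩
    ext <;> simp
end

section
/- Let G be a finitely generated nilpotent group, let H be a subgroup of G, and let N be a normal subgroup of H of finite index in H. Then there exists a normal subgroup M of G of finite index in G such that H ∩ M ≤ N. -/
/-- A finitely generated nilpotent group with torsion center is finite. -/
theorem fgNilp_finite_of_center_torsion (G : Type*) [Group G] [Group.IsNilpotent G] :
    Group.FG G → (∀ x ∈ Subgroup.center G, IsOfFinOrder x) → Finite G := by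
  refine Group.nilpotent_center_quotient_ind
    (P := fun G _ _ => Group.FG G → (∀ x ∈ Subgroup.center G, IsOfFinOrder x) → Finite G)
    G ?_ ?_
  · intro G _ _ _ _
    infer_instance
  · intro G _ _ ih hfg htor
    have hq : Group.FG (G ⧸ Subgroup.center G) := QuotientGroup.fg _
    have hfin : Finite (G ⧸ Subgroup.center G) := by
      apply ih hq
      intro y hy
      obtain ⟨x, rfl⟩ := QuotientGroup.mk_surjective y
      obtain ⟨S, hS⟩ := Group.fg_def.1 hfg
      have hc : ∀ g : G, x * g * x⁻¹ * g⁻¹ ∈ Subgroup.center G := by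
        intro g
        rw [← QuotientGroup.eq_one_iff]
        have := Subgroup.mem_center_iff.1 hy (g : G ⧸ Subgroup.center G)
        simp only [QuotientGroup.mk_mul, QuotientGroup.mk_inv]
        rw [← this]
        group
      have hpow : ∀ (g : G) (n : ℕ), x ^ n * g * (x ^ n)⁻¹ = (x * g * x⁻¹ * g⁻¹) ^ n * g := by
        intro g n
        induction n with
        | zero => simp
        | succ n ihn =>
          have h1 : x ^ (n+1) * g * (x ^ (n+1))⁻¹ = x * (x ^ n * g * (x ^ n)⁻¹) * x⁻¹ := by
            rw [pow_succ' x n]; group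
          have h2 := Subgroup.mem_center_iff.1
            (Subgroup.pow_mem _ (hc g) n) x
          rw [h1, ihn, ← mul_assoc, h2, pow_succ]
          group
      have hn : ∃ n : ℕ, 0 < n ∧ ∀ s ∈ S, (x * s * x⁻¹ * s⁻¹) ^ n = 1 := by
        refine ⟨∏ s ∈ S, orderOf (x * s * x⁻¹ * s⁻¹), ?_, ?_⟩
        · exact Finset.prod_pos fun s _ => (htor _ (hc s)).orderOf_pos
        · intro s hs
          exact orderOf_dvd_iff_pow_eq_one.1
            (Finset.dvd_prod_of_mem (fun s => orderOf (x * s * x⁻¹ * s⁻¹)) hs)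
      obtain ⟨n, hn0, hn⟩ := hn
      refine isOfFinOrder_iff_pow_eq_one.2 ⟨n, hn0, ?_⟩
      rw [← QuotientGroup.mk_pow, QuotientGroup.eq_one_iff, ← Subgroup.centralizer_univ,
        ← Subgroup.coe_top, ← hS, Subgroup.centralizer_closure]
      rw [Subgroup.mem_centralizer_iff]
      intro s hs
      have := hpow s n
      rw [hn s hs, one_mul, mul_inv_eq_iff_eq_mul] at this
      exact this.symm
    have hfi : (Subgroup.center G).FiniteIndex := Subgroup.finiteIndex_of_finite_quotient
    have hzfg : Group.FG (Subgroup.center G) :=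
      Subgroup.fg_of_index_ne_zero _
    have hfinZ : Finite (Subgroup.center G) := by
      letI : CommGroup (Subgroup.center G) :=
        { (inferInstance : Group (Subgroup.center G)) with
          mul_comm := fun a b => Subtype.ext (Subgroup.mem_center_iff.1 b.2 a) }
      exact CommGroup.finite_of_fg_isMulTorsion _ fun z =>
        Submonoid.isOfFinOrder_coe.1 (htor z z.2)
    exact Finite.of_subgroup_quotient (Subgroup.center G)

theorem fgNilp_separable {G : Type*} [Group G] (hfg : Group.FG G) (hnil : Group.IsNilpotent G)
    (A : Subgroup G) (g : G) (hg : g ∉ A) :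
    ∃ K : Subgroup G, K.FiniteIndex ∧ A ≤ K ∧ g ∉ K := by
  obtain ⟨M, hAM, hM⟩ := zorn_le_nonempty₀ {B : Subgroup G | g ∉ B} (by
    intro c hc hchain y hy
    refine ⟨sSup c, ?_, fun z hz => le_sSup hz⟩
    intro hmem
    rw [Subgroup.mem_sSup_of_directedOn ⟨y, hy⟩ hchain.directedOn] at hmem
    obtain ⟨s, hs, hgs⟩ := hmem
    exact hc hs hgs) A hg
  have hgM : g ∉ M := hM.1
  have hmax : ∀ B : Subgroup G, M ≤ B → ∀ b ∈ B, b ∉ M → g ∈ B := by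
    intro B hB b hb hbM
    by_contra h
    exact hbM (hM.2 h hB hb)
  refine ⟨M, ?_, hAM, hgM⟩
  have hq : Group.FG (G ⧸ M.normalCore) := QuotientGroup.fg _
  have hfin : Finite (G ⧸ M.normalCore) := by
    apply fgNilp_finite_of_center_torsion _ hq
    intro y hy
    obtain ⟨x, rfl⟩ := QuotientGroup.mk_surjective y
    -- elements central modulo the core which lie in `M` lie in the core
    have hcomm : ∀ h : G, h * x * h⁻¹ * x⁻¹ ∈ M.normalCore := by
      intro h
      rw [← QuotientGroup.eq_one_iff]
      have := Subgroup.mem_center_iff.1 hy (h : G ⧸ M.normalCore)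
      simp only [QuotientGroup.mk_mul, QuotientGroup.mk_inv]
      rw [this]
      group
    have hzp : ∀ (k : ℤ), x ^ k ∈ M → ((x : G ⧸ M.normalCore)) ^ k = 1 := by
      intro k hk
      rw [← QuotientGroup.mk_zpow, QuotientGroup.eq_one_iff]
      intro h
      have h1 : h * x ^ k * h⁻¹ * (x ^ k)⁻¹ ∈ M.normalCore := by
        rw [← QuotientGroup.eq_one_iff]
        have := Subgroup.mem_center_iff.1 (Subgroup.zpow_mem _ hy k) (h : G ⧸ M.normalCore)
        simp only [QuotientGroup.mk_mul, QuotientGroup.mk_inv, QuotientGroup.mk_zpow]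
        rw [this]
        group
      have := M.mul_mem (M.normalCore_le h1) hk
      simpa using this
    by_contra hinf
    have hnot : ∀ k : ℤ, k ≠ 0 → x ^ k ∉ M := fun k hk hm =>
      hinf (isOfFinOrder_iff_zpow_eq_one.2 ⟨k, hk, hzp k hm⟩)
    have key : ∀ k : ℤ, k ≠ 0 → ∃ j : ℤ, g * x ^ (k * j) ∈ M := by
      intro k hk
      let Z : Subgroup (G ⧸ M.normalCore) := Subgroup.zpowers ((x : G ⧸ M.normalCore) ^ k)
      have hZ : Z.Normal := by
        refine ⟨fun n hn h => ?_⟩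
        have hn' : n ∈ Subgroup.center (G ⧸ M.normalCore) :=
          (Subgroup.zpowers_le.2 (Subgroup.zpow_mem _ hy k)) hn
        rw [Subgroup.mem_center_iff.1 hn' h]
        simpa using hn
      have hmem := hmax ((M.map (QuotientGroup.mk' M.normalCore) ⊔ Z).comap
        (QuotientGroup.mk' M.normalCore))
        (Subgroup.map_le_iff_le_comap.1 le_sup_left) (x ^ k)
        (by
          rw [Subgroup.mem_comap]
          exact Subgroup.mem_sup_right (Subgroup.mem_zpowers_iff.2 ⟨1, by simp⟩))
        (hnot k hk)
      rw [Subgroup.mem_comap, Subgroup.mem_sup_of_normal_right] at hmem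
      obtain ⟨_, ⟨m, hm, rfl⟩, _, ⟨j, rfl⟩, he⟩ := hmem
      refine ⟨-j, ?_⟩
      have h2 : (m : G ⧸ M.normalCore) = ((g * x ^ (k * -j) : G) : G ⧸ M.normalCore) := by
        simp only [QuotientGroup.mk_mul, QuotientGroup.mk_zpow]
        simp only [QuotientGroup.mk'_apply] at he
        rw [← he]
        simp [zpow_mul]
      have h3 := M.mul_mem hm (M.normalCore_le (QuotientGroup.eq.1 h2))
      simpa using h3
    obtain ⟨j, hj⟩ := key 1 one_ne_zero
    have hj0 : j ≠ 0 := by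
      rintro rfl
      exact hgM (by simpa using hj)
    obtain ⟨i, hi⟩ := key (2 * j) (by omega)
    have h4 := M.mul_mem (M.inv_mem hj) hi
    have h5 : (g * x ^ (1 * j))⁻¹ * (g * x ^ (2 * j * i)) = x ^ (j * (2 * i - 1)) := by
      rw [mul_inv_rev, mul_assoc, inv_mul_cancel_left, ← zpow_neg, ← zpow_add]
      congr 1; ring
    rw [h5] at h4
    exact hnot _ (mul_ne_zero hj0 (by omega)) h4
  have : M.normalCore.FiniteIndex := Subgroup.finiteIndex_of_finite_quotient
  exact Subgroup.finiteIndex_of_le M.normalCore_le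

/-- In a finitely generated nilpotent group `G`, every finite-index normal subgroup `N` of a
subgroup `H` contains the intersection of `H` with some finite-index normal subgroup `M`
of `G`. -/
theorem exists_finiteIndex_normal_subgroupOf_le {G : Type*} [Group G]
    (hfg : Group.FG G) (hnil : Group.IsNilpotent G)
    (H : Subgroup G) (N : Subgroup H) (hNn : N.Normal) (hNf : N.FiniteIndex) :
    ∃ M : Subgroup G, M.Normal ∧ M.FiniteIndex ∧ M.subgroupOf H ≤ N := by
  have hsep : ∀ q : H ⧸ N, ∃ K : Subgroup G, K.FiniteIndex ∧ N.map H.subtype ≤ K ∧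
      ((q.out : G) ∈ K → q.out ∈ N) := by
    intro q
    by_cases hq : q.out ∈ N
    · exact ⟨⊤, inferInstance, le_top, fun _ => hq⟩
    · obtain ⟨K, h1, h2, h3⟩ := fgNilp_separable hfg hnil (N.map H.subtype) (q.out : G) (by
        rintro ⟨n, hn, he⟩
        exact hq ((Subtype.ext he : n = q.out) ▸ hn))
      exact ⟨K, h1, h2, fun h => (h3 h).elim⟩
  choose K hKf hKN hK using hsep
  have hfin : Finite (H ⧸ N) := Subgroup.finite_quotient_of_finiteIndex
  have hI : (⨅ q, K q).FiniteIndex := Subgroup.finiteIndex_iInf hKf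
  refine ⟨(⨅ q, K q).normalCore, inferInstance, inferInstance, ?_⟩
  intro h hh
  have h1 : (h : G) ∈ K (h : H ⧸ N) :=
    (iInf_le K _) (Subgroup.normalCore_le _ (Subgroup.mem_subgroupOf.1 hh))
  have h2 : ((h : H ⧸ N).out)⁻¹ * h ∈ N := QuotientGroup.eq.1 (QuotientGroup.out_eq' _)
  have h3 : (((h : H ⧸ N).out : H) : G) ∈ K (h : H ⧸ N) := by
    have h4 := hKN (h : H ⧸ N) ⟨_, h2, rfl⟩
    have h5 := (K (h : H ⧸ N)).mul_mem h1 ((K (h : H ⧸ N)).inv_mem h4)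
    simpa using h5
  have h6 := N.mul_mem (hK _ h3) h2
  simpa using h6
end
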